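/- Let P be the uniform (arc-length) probability distribution on the ellipse L = {(x₁,x₂) : x₁² + 4x₂² = 4}. Then the optimal set of two-means for P is {(c, 0), (−c, 0)}, where c = (∫_{−π/2}^{π/2} 2 cos θ √(4 sin²θ + cos²θ) dθ) / (∫_{−π/2}^{π/2} √(4 sin²θ + cos²θ) dθ) is the first coordinate of the conditional expectation of X given that X lies in the closed right half-plane {x₁ ≥ 0}; moreover the boundary of the two Voronoi regions is the minor axis (the x₂-axis). -/

import Mathlib

open MeasureTheory Real Filter
open scoped ENNReal

noncomputable section

/-- The plane `ℝ²` with the Euclidean norm. -/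
abbrev E2 : Type := EuclideanSpace ℝ (Fin 2)

/-- The point `(a, b)` of `ℝ²`. -/
def pt (a b : ℝ) : E2 := !₂[a, b]

/-- The `n`th quantization error of a Borel probability measure `P` on `ℝ²`:
the infimum of `∫ min_{a ∈ α} ‖x - a‖² dP(x)` over all (nonempty) finite sets
`α ⊆ ℝ²` with at most `n` elements. -/
def quantErr (P : Measure E2) (n : ℕ) : ℝ :=
  sInf {v : ℝ | ∃ α : Set E2, α.Finite ∧ α.Nonempty ∧ α.ncard ≤ n ∧
    v = ∫ x, sInf ((fun a => ‖x - a‖ ^ 2) '' α) ∂P}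

/-- `α` is an optimal set of `n`-means for `P` if it attains the `n`th
quantization error. -/
def IsOptimalSet (P : Measure E2) (n : ℕ) (α : Set E2) : Prop :=
  α.Finite ∧ α.Nonempty ∧ α.ncard ≤ n ∧
    (∫ x, sInf ((fun a => ‖x - a‖ ^ 2) '' α) ∂P) = quantErr P n

/-- The ellipse `L = {(x₁, x₂) : x₁² + 4x₂² = 4}`. -/
def ellipseL : Set E2 := {p : E2 | (p 0) ^ 2 + 4 * (p 1) ^ 2 = 4}

/-- The perimeter `A = ∫₀^{2π} √(4 sin²θ + cos²θ) dθ` of the ellipse. -/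
def ellipseA : ℝ :=
  ∫ θ in (0 : ℝ)..(2 * Real.pi), Real.sqrt (4 * Real.sin θ ^ 2 + Real.cos θ ^ 2)

/-- The uniform probability distribution on the ellipse `L`: density `1/A`
with respect to one-dimensional Hausdorff (arc-length) measure on `L`. -/
def ellipseP : Measure E2 :=
  (ENNReal.ofReal ellipseA)⁻¹ • (μH[1] : Measure E2).restrict ellipseL

/-!
Let `P` be a probability measure invariant under `x ↦ -x`. Averaging over `x` and `-x` turns the
distortion of the pair `m ± d` into `∫ ‖x‖² + ‖m‖² + ‖d‖² - 2 ∫ max |⟪x, d⟫| |⟪m, d⟫|`. Completing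
the square then shows that `±κ u`, with `κ = ∫ |⟪x, u⟫|`, is optimal as soon as
`∫ max |⟪x, v⟫| s ≤ √(κ² + s²)` for every unit vector `v` and every `s ≥ 0`.

On the ellipse, arc length is `w θ dθ` with `w θ = √(4 sin² θ + cos² θ)`, and a unit vector `v`
becomes an angle `ψ` with `w ψ ⟪x, v⟫ = 2 cos (θ - ψ)`. If `cos 2ψ ≥ 0`, pairing `ψ + θ` with
`ψ - θ` and using `w (ψ + θ) + w (ψ - θ) ≤ 2 w ψ w θ` bounds the part without `s` by its value on
the major axis; the part with `s` is quadratically small and is absorbed by explicit estimates of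
the perimeter and of `κ`. If `cos 2ψ ≤ 0`, pairing `θ` with `-θ` and Cauchy–Schwarz suffice.
-/

open scoped Topology RealInnerProductSpace

/-! ### Arc length and one-dimensional Hausdorff measure -/

section ArcLength

variable {X : Type*} [MetricSpace X] [MeasurableSpace X] [BorelSpace X] {γ : ℝ → X}

lemma hausdorffMeasure_image_le_ofReal_mul_volume {s : Set ℝ} {K : ℝ} (hK : 0 ≤ K)
    (h : ∀ u ∈ s, ∀ v ∈ s, dist (γ u) (γ v) ≤ K * dist u v) :
    μH[1] (γ '' s) ≤ ENNReal.ofReal K * volume s := by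
  have hlip : LipschitzOnWith K.toNNReal γ s := LipschitzOnWith.of_dist_le_mul fun u hu v hv => by
    rw [Real.coe_toNNReal K hK]
    exact h u hu v hv
  simpa only [hausdorffMeasure_real, ENNReal.rpow_one, ENNReal.ofReal] using
    hlip.hausdorffMeasure_image_le zero_le_one

lemma ofReal_mul_volume_le_hausdorffMeasure_image {s : Set ℝ} {K : ℝ}
    (h : ∀ u ∈ s, ∀ v ∈ s, K * dist u v ≤ dist (γ u) (γ v)) :
    ENNReal.ofReal K * volume s ≤ μH[1] (γ '' s) := by
  rcases le_or_gt K 0 with hK | hK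
  · simp [ENNReal.ofReal_of_nonpos hK]
  have hanti : AntilipschitzWith K⁻¹.toNNReal (s.domRestrict γ) :=
    AntilipschitzWith.of_le_mul_dist fun u v => by
      rw [Real.coe_toNNReal _ (by positivity), inv_mul_eq_div, le_div_iff₀ hK, mul_comm]
      exact h u u.2 v v.2
  have hle : volume s ≤ ENNReal.ofReal K⁻¹ * μH[1] (γ '' s) := by
    have hcoe := (isometry_subtype_coe (s := s)).hausdorffMeasure_image (d := 1)
      (Or.inl zero_le_one) Set.univ
    have himage := hanti.le_hausdorffMeasure_image (d := 1) zero_le_one Set.univ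
    rwa [← hcoe, Set.image_univ, Set.image_univ, Subtype.range_coe, Set.range_domRestrict,
      hausdorffMeasure_real, ENNReal.rpow_one] at himage
  calc ENNReal.ofReal K * volume s
      ≤ ENNReal.ofReal K * (ENNReal.ofReal K⁻¹ * μH[1] (γ '' s)) := by gcongr
    _ = μH[1] (γ '' s) := by
      rw [← mul_assoc, ← ENNReal.ofReal_mul hK.le, mul_inv_cancel₀ hK.ne', ENNReal.ofReal_one,
        one_mul]

lemma abs_hausdorffMeasure_real_image_Ioc_sub_le {x y w ε : ℝ} (hxy : x ≤ y) (hw : 0 ≤ w)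
    (hε : 0 ≤ ε) (h : ∀ u ∈ Set.Ioc x y, ∀ v ∈ Set.Ioc x y,
      |dist (γ u) (γ v) - w * dist u v| ≤ ε * dist u v) :
    |(μH[1] : Measure X).real (γ '' Set.Ioc x y) - w * (y - x)| ≤ ε * (y - x) := by
  have hyx : 0 ≤ y - x := sub_nonneg.2 hxy
  have hupper : μH[1] (γ '' Set.Ioc x y) ≤ ENNReal.ofReal ((w + ε) * (y - x)) := by
    rw [ENNReal.ofReal_mul (by positivity), ← Real.volume_Ioc]
    exact hausdorffMeasure_image_le_ofReal_mul_volume (by positivity)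
      fun u hu v hv => by linarith [(abs_le.1 (h u hu v hv)).2]
  have hlower : ENNReal.ofReal ((w - ε) * (y - x)) ≤ μH[1] (γ '' Set.Ioc x y) := by
    rw [ENNReal.ofReal_mul' hyx, ← Real.volume_Ioc (a := x)]
    exact ofReal_mul_volume_le_hausdorffMeasure_image
      fun u hu v hv => by linarith [(abs_le.1 (h u hu v hv)).1]
  have hupper' := ENNReal.toReal_le_of_le_ofReal (by positivity) hupper
  have hlower' := (ENNReal.ofReal_le_iff_le_toReal (hupper.trans_lt ENNReal.ofReal_lt_top).ne).1
    hlower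
  rw [Measure.real, abs_le]
  constructor <;> linarith

/-- The arc-length measure of the curve `γ` on the parameter set `s`, as a measure on the
parameters: the pullback of one-dimensional Hausdorff measure along `γ` restricted to `s`. -/
def arcLengthMeasure (γ : ℝ → X) (s : Set ℝ) : Measure ℝ :=
  ((μH[1] : Measure X).comap (s.domRestrict γ)).map (↑)

lemma arcLengthMeasure_apply {s t : Set ℝ} (hs : MeasurableSet s) (ht : MeasurableSet t)
    (hγ : ContinuousOn γ s) (hinj : Set.InjOn γ s) :
    arcLengthMeasure γ s t = μH[1] (γ '' (s ∩ t)) := by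
  rw [arcLengthMeasure, Measure.map_apply measurable_subtype_coe ht,
    (hγ.measurableEmbedding hs hinj).comap_apply, Set.domRestrict_eq, Set.image_comp,
    Subtype.image_preimage_coe]

lemma integral_arcLengthMeasure {G : Type*} [NormedAddCommGroup G] [NormedSpace ℝ G] {s : Set ℝ}
    (hs : MeasurableSet s) (hγ : ContinuousOn γ s) (hinj : Set.InjOn γ s) (F : X → G) :
    ∫ θ, F (γ θ) ∂arcLengthMeasure γ s = ∫ x in γ '' s, F x ∂μH[1] := by
  have hemb := hγ.measurableEmbedding hs hinj
  rw [arcLengthMeasure, (MeasurableEmbedding.subtype_coe hs).integral_map, ← Set.range_domRestrict,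
    ← hemb.map_comap, hemb.integral_map]
  rfl

end ArcLength

section IntervalMeasure

variable {ν : Measure ℝ} [IsFiniteMeasure ν] {w : ℝ → ℝ} {a b : ℝ}

lemma measureReal_Ioc_sub_measureReal_Ioc {x y : ℝ} (hax : a ≤ x) (hxy : x ≤ y) :
    ν.real (Set.Ioc a y) - ν.real (Set.Ioc a x) = ν.real (Set.Ioc x y) := by
  rw [← Set.Ioc_union_Ioc_eq_Ioc hax hxy, measureReal_union (Set.Ioc_disjoint_Ioc_of_le le_rfl)
    measurableSet_Ioc, add_sub_cancel_left]

lemma hasDerivWithinAt_measureReal_Ioc {w θ : ℝ} (hθ : θ ∈ Set.Icc a b)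
    (h : ∀ ε > 0, ∀ᶠ p : ℝ × ℝ in 𝓝 (θ, θ), a ≤ p.1 → p.1 ≤ p.2 → p.2 ≤ b →
      |ν.real (Set.Ioc p.1 p.2) - w * (p.2 - p.1)| ≤ ε * (p.2 - p.1)) :
    HasDerivWithinAt (fun x => ν.real (Set.Ioc a x)) w (Set.Icc a b) θ := by
  rw [hasDerivWithinAt_iff_isLittleO, Asymptotics.isLittleO_iff]
  intro ε hε
  have hleft : Tendsto (fun x : ℝ => (x, θ)) (𝓝 θ) (𝓝 (θ, θ)) :=
    Continuous.tendsto (by fun_prop) θ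
  have hright : Tendsto (fun x : ℝ => (θ, x)) (𝓝 θ) (𝓝 (θ, θ)) :=
    Continuous.tendsto (by fun_prop) θ
  filter_upwards [nhdsWithin_le_nhds (hleft.eventually (h ε hε)),
    nhdsWithin_le_nhds (hright.eventually (h ε hε)), self_mem_nhdsWithin] with x hxθ hθx hx
  rw [smul_eq_mul, Real.norm_eq_abs, Real.norm_eq_abs]
  rcases le_total θ x with hle | hle
  · rw [measureReal_Ioc_sub_measureReal_Ioc hθ.1 hle, abs_of_nonneg (sub_nonneg.2 hle),
      mul_comm (x - θ)]
    exact hθx hθ.1 hle hx.2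
  · rw [← abs_neg, neg_sub', neg_sub, measureReal_Ioc_sub_measureReal_Ioc hx.1 hle,
      abs_sub_comm x, abs_of_nonneg (sub_nonneg.2 hle), ← neg_mul, neg_sub, mul_comm (θ - x)]
    exact hxθ hx.1 hle hθ.2

lemma measure_Ioc_eq_ofReal_integral (hw : Continuous w)
    (h : ∀ θ ∈ Set.Icc a b, ∀ ε > 0, ∀ᶠ p : ℝ × ℝ in 𝓝 (θ, θ), a ≤ p.1 → p.1 ≤ p.2 → p.2 ≤ b →
      |ν.real (Set.Ioc p.1 p.2) - w θ * (p.2 - p.1)| ≤ ε * (p.2 - p.1))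
    {x y : ℝ} (hax : a ≤ x) (hxy : x ≤ y) (hyb : y ≤ b) :
    ν (Set.Ioc x y) = ENNReal.ofReal (∫ θ in x..y, w θ) := by
  have hderiv : ∀ θ ∈ Set.Icc a b,
      HasDerivWithinAt (fun z => ν.real (Set.Ioc a z)) (w θ) (Set.Icc a b) θ :=
    fun θ hθ => hasDerivWithinAt_measureReal_Ioc hθ (h θ hθ)
  have hsub := Set.Icc_subset_Icc hax hyb
  rw [intervalIntegral.integral_eq_sub_of_hasDerivAt_of_le hxy
    (fun θ hθ => (hderiv θ (hsub hθ)).continuousWithinAt.mono hsub)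
    (fun θ hθ => (hderiv θ (hsub ⟨hθ.1.le, hθ.2.le⟩)).hasDerivAt
      (Icc_mem_nhds (hax.trans_lt hθ.1) (hθ.2.trans_le hyb)))
    (hw.intervalIntegrable _ _), measureReal_Ioc_sub_measureReal_Ioc hax hxy,
    ofReal_measureReal]

lemma restrict_Ioc_eq_withDensity (hw : Continuous w) (hw0 : ∀ θ, 0 ≤ w θ)
    (h : ∀ θ ∈ Set.Icc a b, ∀ ε > 0, ∀ᶠ p : ℝ × ℝ in 𝓝 (θ, θ), a ≤ p.1 → p.1 ≤ p.2 → p.2 ≤ b →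
      |ν.real (Set.Ioc p.1 p.2) - w θ * (p.2 - p.1)| ≤ ε * (p.2 - p.1)) :
    ν.restrict (Set.Ioc a b) =
      (volume.restrict (Set.Ioc a b)).withDensity fun θ => ENNReal.ofReal (w θ) := by
  refine Measure.ext_of_Ioc _ _ fun x y _ => ?_
  rw [Measure.restrict_apply measurableSet_Ioc, withDensity_apply _ measurableSet_Ioc,
    Measure.restrict_restrict measurableSet_Ioc, Set.Ioc_inter_Ioc]
  rcases le_total (min y b) (max x a) with hle | hle
  · simp [Set.Ioc_eq_empty (not_lt.2 hle)]
  · rw [measure_Ioc_eq_ofReal_integral hw h (le_max_right _ _) hle (min_le_right _ _),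
      intervalIntegral.integral_of_le hle,
      ofReal_integral_eq_lintegral_ofReal (hw.intervalIntegrable _ _).1
        (Eventually.of_forall hw0)]

end IntervalMeasure

section ArcLengthIntegral

variable {E : Type*} [NormedAddCommGroup E] [NormedSpace ℝ E] {γ : ℝ → E} {a b : ℝ}

lemma eventually_abs_dist_sub_le_of_hasStrictDerivAt {γ' : E} {θ : ℝ}
    (hγ : HasStrictDerivAt γ γ' θ) {ε : ℝ} (hε : 0 < ε) :
    ∀ᶠ p : ℝ × ℝ in 𝓝 (θ, θ),
      |dist (γ p.1) (γ p.2) - ‖γ'‖ * dist p.1 p.2| ≤ ε * dist p.1 p.2 := by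
  filter_upwards [hγ.hasStrictFDerivAt.isLittleO.def hε] with p hp
  have hnorm : ‖(p.1 - p.2) • γ'‖ = ‖γ'‖ * dist p.1 p.2 := by
    rw [norm_smul, mul_comm, dist_eq_norm]
  rw [← hnorm, dist_eq_norm, dist_eq_norm]
  exact (abs_norm_sub_norm_le _ _).trans hp

variable [MeasurableSpace E] [BorelSpace E]

lemma hausdorffMeasure_image_Ioc_lt_top (hγ : ContDiff ℝ 1 γ) (a b : ℝ) :
    μH[1] (γ '' Set.Ioc a b) < ∞ := by
  obtain ⟨K, hK⟩ := hγ.locallyLipschitz.locallyLipschitzOn.exists_lipschitzOnWith_of_compact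
    (isCompact_Icc (a := a) (b := b))
  refine ((hK.mono Set.Ioc_subset_Icc_self).hausdorffMeasure_image_le zero_le_one).trans_lt ?_
  rw [hausdorffMeasure_real, ENNReal.rpow_one, Real.volume_Ioc]
  exact ENNReal.mul_lt_top ENNReal.coe_lt_top ENNReal.ofReal_lt_top

lemma arcLengthMeasure_Ioc_eq_withDensity (hγ : ContDiff ℝ 1 γ)
    (hinj : Set.InjOn γ (Set.Ioc a b)) :
    arcLengthMeasure γ (Set.Ioc a b) =
      (volume.restrict (Set.Ioc a b)).withDensity fun θ => ENNReal.ofReal ‖deriv γ θ‖ := by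
  have happly : ∀ {t}, MeasurableSet t →
      arcLengthMeasure γ (Set.Ioc a b) t = μH[1] (γ '' (Set.Ioc a b ∩ t)) := fun ht =>
    arcLengthMeasure_apply measurableSet_Ioc ht hγ.continuous.continuousOn hinj
  have hfinite : IsFiniteMeasure (arcLengthMeasure γ (Set.Ioc a b)) := ⟨by
    rw [happly .univ, Set.inter_univ]
    exact hausdorffMeasure_image_Ioc_lt_top hγ a b⟩
  have hrestrict : (arcLengthMeasure γ (Set.Ioc a b)).restrict (Set.Ioc a b) =
      arcLengthMeasure γ (Set.Ioc a b) := by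
    refine Measure.restrict_eq_self_of_ae_mem ?_
    rw [arcLengthMeasure, (MeasurableEmbedding.subtype_coe measurableSet_Ioc).ae_map_iff]
    exact Eventually.of_forall Subtype.property
  rw [← hrestrict]
  refine restrict_Ioc_eq_withDensity (hγ.continuous_deriv le_rfl).norm (fun _ => norm_nonneg _)
    fun θ _ ε hε => ?_
  have hlin := eventually_abs_dist_sub_le_of_hasStrictDerivAt
    (hγ.hasStrictDerivAt one_ne_zero (x := θ)) hε
  rw [nhds_prod_eq, Metric.nhds_basis_ball.prod_self.eventually_iff] at hlin ⊢
  obtain ⟨δ, hδ, hlin⟩ := hlin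
  refine ⟨δ, hδ, fun p hp hap hle hpb => ?_⟩
  rw [Measure.real, happly measurableSet_Ioc,
    Set.inter_eq_right.2 (Set.Ioc_subset_Ioc hap hpb)]
  have hsub : Set.Ioc p.1 p.2 ⊆ Metric.ball θ δ :=
    Set.Ioc_subset_Icc_self.trans ((convex_ball θ δ).ordConnected.out hp.1 hp.2)
  exact abs_hausdorffMeasure_real_image_Ioc_sub_le hle (norm_nonneg _) hε.le
    fun u hu v hv => @hlin (u, v) ⟨hsub hu, hsub hv⟩

theorem setIntegral_hausdorffMeasure_image_Ioc {G : Type*} [NormedAddCommGroup G]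
    [NormedSpace ℝ G] (hγ : ContDiff ℝ 1 γ) (hinj : Set.InjOn γ (Set.Ioc a b)) (F : E → G) :
    ∫ x in γ '' Set.Ioc a b, F x ∂μH[1] = ∫ θ in Set.Ioc a b, ‖deriv γ θ‖ • F (γ θ) := by
  rw [← integral_arcLengthMeasure measurableSet_Ioc hγ.continuous.continuousOn hinj,
    arcLengthMeasure_Ioc_eq_withDensity hγ hinj,
    integral_withDensity_eq_integral_toReal_smul
      (hγ.continuous_deriv le_rfl).norm.measurable.ennreal_ofReal
      (Eventually.of_forall fun _ => ENNReal.ofReal_lt_top)]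
  simp only [ENNReal.toReal_ofReal (norm_nonneg _)]

end ArcLengthIntegral

/-! ### Two-means of a centrally symmetric measure -/

section InnerProduct

variable {E : Type*} [NormedAddCommGroup E] [InnerProductSpace ℝ E]

lemma min_norm_sub_sq_add_sub (x m d : E) :
    min (‖x - (m + d)‖ ^ 2) (‖x - (m - d)‖ ^ 2) = ‖x - m‖ ^ 2 + ‖d‖ ^ 2 - 2 * |⟪x - m, d⟫| := by
  rw [← sub_sub, sub_sub_eq_add_sub, add_sub_right_comm, norm_sub_sq_real, norm_add_sq_real]
  rcases abs_cases ⟪x - m, d⟫ with ⟨habs, _⟩ | ⟨habs, _⟩ <;> rw [habs]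
  · rw [min_eq_left (by linarith)]
    ring
  · rw [min_eq_right (by linarith)]
    ring

lemma abs_sub_add_abs_add (p q : ℝ) : |p - q| + |p + q| = 2 * max |p| |q| := by
  rw [max_def]
  split_ifs <;> grind

lemma min_norm_sub_sq_add_min_norm_neg_sub_sq (x m d : E) :
    min (‖x - (m + d)‖ ^ 2) (‖x - (m - d)‖ ^ 2) + min (‖-x - (m + d)‖ ^ 2) (‖-x - (m - d)‖ ^ 2) =
      2 * (‖x‖ ^ 2 + (‖m‖ ^ 2 + ‖d‖ ^ 2)) - 4 * max |⟪x, d⟫| |⟪m, d⟫| := by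
  have hneg : |⟪-x - m, d⟫| = |⟪x, d⟫ + ⟪m, d⟫| := by
    rw [← neg_add', inner_neg_left, abs_neg, inner_add_left]
  have hnorm := parallelogram_law_with_norm ℝ x m
  rw [min_norm_sub_sq_add_sub, min_norm_sub_sq_add_sub, hneg, inner_sub_left, ← neg_add', norm_neg]
  linarith [abs_sub_add_abs_add ⟪x, d⟫ ⟪m, d⟫]

end InnerProduct

section TwoMeans

variable {E : Type*} [NormedAddCommGroup E] [MeasurableSpace E]

/-- The mean squared distance from a `P`-random point to the nearer of the two points `a` and `b`:
the distortion that an optimal set of two-means minimizes. -/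
def twoPointDistortion (P : Measure E) (a b : E) : ℝ :=
  ∫ x, min (‖x - a‖ ^ 2) (‖x - b‖ ^ 2) ∂P

variable {P : Measure E}

lemma integrable_min_norm_sub_sq [IsFiniteMeasure P] (hP : MemLp id 2 P) (a b : E) :
    Integrable (fun x => min (‖x - a‖ ^ 2) (‖x - b‖ ^ 2)) P :=
  (hP.sub (memLp_const a)).norm.integrable_sq.inf (hP.sub (memLp_const b)).norm.integrable_sq

variable [InnerProductSpace ℝ E]

lemma integrable_max_abs_inner [IsFiniteMeasure P] (hP : MemLp id 2 P) (d : E) (s : ℝ) :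
    Integrable (fun x => max |⟪x, d⟫| s) P :=
  ((hP.integrable one_le_two).inner_const d).abs.sup (integrable_const s)

variable [BorelSpace E] [IsProbabilityMeasure P] [P.IsNegInvariant]

-- Averaging the integrand over `x` and `-x` leaves `m` only inside the maximum.
lemma twoPointDistortion_add_sub (hP : MemLp id 2 P) (m d : E) :
    twoPointDistortion P (m + d) (m - d) =
      ∫ x, ‖x‖ ^ 2 ∂P + (‖m‖ ^ 2 + ‖d‖ ^ 2) - 2 * ∫ x, max |⟪x, d⟫| |⟪m, d⟫| ∂P := by
  have hint := integrable_min_norm_sub_sq hP (m + d) (m - d)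
  have hsq : Integrable (fun x : E => ‖x‖ ^ 2) P := hP.norm.integrable_sq
  have hsum : Integrable (fun x : E => ‖x‖ ^ 2 + (‖m‖ ^ 2 + ‖d‖ ^ 2)) P :=
    hsq.add (integrable_const _)
  have hmax := integrable_max_abs_inner hP d |⟪m, d⟫|
  have hdouble : 2 * twoPointDistortion P (m + d) (m - d) =
      ∫ x, (2 * (‖x‖ ^ 2 + (‖m‖ ^ 2 + ‖d‖ ^ 2)) - 4 * max |⟪x, d⟫| |⟪m, d⟫|) ∂P := by
    simp only [← min_norm_sub_sq_add_min_norm_neg_sub_sq]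
    rw [integral_add hint hint.comp_neg,
      integral_neg_eq_self (fun x => min (‖x - (m + d)‖ ^ 2) (‖x - (m - d)‖ ^ 2)), two_mul]
    rfl
  rw [integral_sub (hsum.const_mul 2) (hmax.const_mul 4),
    integral_const_mul, integral_const_mul, integral_add hsq (integrable_const _), integral_const,
    probReal_univ, one_smul] at hdouble
  linarith

-- With `d = r • u` and `s = |⟪m, u⟫| ≤ ‖m‖`, the excess over `∫ ‖x‖² - κ²` is at least
-- `κ² + s² + r² - 2 r √(κ² + s²) = (r - √(κ² + s²))²`.
lemma integral_norm_sq_sub_sq_le_twoPointDistortion (hP : MemLp id 2 P) {κ : ℝ}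
    (hκ : ∀ u : E, ‖u‖ = 1 → ∀ s, 0 ≤ s → ∫ x, max |⟪x, u⟫| s ∂P ≤ √(κ ^ 2 + s ^ 2)) (a b : E) :
    ∫ x, ‖x‖ ^ 2 ∂P - κ ^ 2 ≤ twoPointDistortion P a b := by
  obtain ⟨m, d, rfl, rfl⟩ : ∃ m d, a = m + d ∧ b = m - d :=
    ⟨(2 : ℝ)⁻¹ • (a + b), (2 : ℝ)⁻¹ • (a - b), by module, by module⟩
  rw [twoPointDistortion_add_sub hP]
  rcases eq_or_ne d 0 with rfl | hd
  · simp only [inner_zero_right, abs_zero, max_self, integral_zero, norm_zero]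
    nlinarith [sq_nonneg κ, sq_nonneg ‖m‖]
  obtain ⟨u, hu, hdu⟩ : ∃ u : E, ‖u‖ = 1 ∧ d = ‖d‖ • u :=
    ⟨‖d‖⁻¹ • d, norm_smul_inv_norm hd, by rw [smul_inv_smul₀ (norm_ne_zero_iff.2 hd)]⟩
  have hinner (y : E) : |⟪y, d⟫| = ‖d‖ * |⟪y, u⟫| := by
    rw [hdu, real_inner_smul_right, abs_mul, abs_norm, norm_smul, hu, norm_norm, mul_one]
  have hmu : |⟪m, u⟫| ^ 2 ≤ ‖m‖ ^ 2 := by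
    gcongr
    simpa [hu] using abs_real_inner_le_norm m u
  have hmax := mul_le_mul_of_nonneg_left (hκ u hu _ (abs_nonneg ⟪m, u⟫)) (norm_nonneg d)
  have hsqrt := Real.sq_sqrt (add_nonneg (sq_nonneg κ) (sq_nonneg |⟪m, u⟫|))
  simp only [hinner, ← mul_max_of_nonneg _ _ (norm_nonneg d), integral_const_mul]
  nlinarith [sq_nonneg (‖d‖ - √(κ ^ 2 + |⟪m, u⟫| ^ 2))]

lemma twoPointDistortion_smul_neg_smul (hP : MemLp id 2 P) {u : E} (hu : ‖u‖ = 1) {κ : ℝ}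
    (hκ : κ = ∫ x, |⟪x, u⟫| ∂P) :
    twoPointDistortion P (κ • u) (-(κ • u)) = ∫ x, ‖x‖ ^ 2 ∂P - κ ^ 2 := by
  have hκ0 : 0 ≤ κ := hκ ▸ integral_nonneg fun _ => abs_nonneg _
  have hinner (x : E) : max |⟪x, κ • u⟫| |⟪(0 : E), κ • u⟫| = κ * |⟪x, u⟫| := by
    rw [inner_zero_left, abs_zero, max_eq_left (abs_nonneg _), real_inner_smul_right, abs_mul,
      abs_of_nonneg hκ0]
  have h := twoPointDistortion_add_sub hP 0 (κ • u)
  simp only [hinner, integral_const_mul, ← hκ, zero_add, zero_sub, norm_zero, norm_smul, hu,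
    Real.norm_eq_abs, abs_of_nonneg hκ0] at h
  rw [h]
  ring

end TwoMeans

section OptimalSet

lemma exists_eq_pair_of_ncard_le_two {X : Type*} {α : Set X} (hfin : α.Finite)
    (hne : α.Nonempty) (hcard : α.ncard ≤ 2) : ∃ a b, α = {a, b} := by
  have hpos := (Set.ncard_pos hfin).2 hne
  obtain hone | htwo : α.ncard = 1 ∨ α.ncard = 2 := by lia
  · obtain ⟨a, rfl⟩ := Set.ncard_eq_one.1 hone
    exact ⟨a, a, (Set.pair_eq_singleton a).symm⟩
  · obtain ⟨a, b, _, rfl⟩ := Set.ncard_eq_two.1 htwo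
    exact ⟨a, b, rfl⟩

lemma integral_sInf_image_pair (P : Measure E2) (a b : E2) :
    ∫ x, sInf ((fun y => ‖x - y‖ ^ 2) '' {a, b}) ∂P = twoPointDistortion P a b := by
  simp only [Set.image_pair, csInf_pair]
  rfl

lemma isOptimalSet_two_pair {P : Measure E2} {a b : E2}
    (h : ∀ a' b', twoPointDistortion P a b ≤ twoPointDistortion P a' b') :
    IsOptimalSet P 2 {a, b} := by
  have hfin : ({a, b} : Set E2).Finite := Set.toFinite _
  have hcard : ({a, b} : Set E2).ncard ≤ 2 :=
    (Set.ncard_insert_le _ _).trans_eq (by rw [Set.ncard_singleton])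
  refine ⟨hfin, Set.insert_nonempty _ _, hcard, Eq.symm (IsLeast.csInf_eq ⟨?_, ?_⟩)⟩
  · exact ⟨_, hfin, Set.insert_nonempty _ _, hcard, rfl⟩
  · rintro _ ⟨α, hαfin, hαne, hαcard, rfl⟩
    obtain ⟨a', b', rfl⟩ := exists_eq_pair_of_ncard_le_two hαfin hαne hαcard
    simpa only [integral_sInf_image_pair] using h a' b'

theorem isOptimalSet_smul_neg_smul {P : Measure E2} [IsProbabilityMeasure P] [P.IsNegInvariant]
    (hP : MemLp id 2 P) {u : E2} (hu : ‖u‖ = 1) {κ : ℝ} (hκ : κ = ∫ x, |⟪x, u⟫| ∂P)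
    (hmax : ∀ v : E2, ‖v‖ = 1 → ∀ s, 0 ≤ s → ∫ x, max |⟪x, v⟫| s ∂P ≤ √(κ ^ 2 + s ^ 2)) :
    IsOptimalSet P 2 {κ • u, -(κ • u)} :=
  isOptimalSet_two_pair fun a b =>
    (twoPointDistortion_smul_neg_smul hP hu hκ).trans_le
      (integral_norm_sq_sub_sq_le_twoPointDistortion hP hmax a b)

end OptimalSet

/-! ### Integrals of the speed of the ellipse -/

section SymmetricIntegral

lemma integral_le_integral_of_add_comp_neg_le {a : ℝ} (ha : 0 ≤ a) {F G : ℝ → ℝ}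
    (hF : Continuous F) (hG : Continuous G)
    (h : ∀ θ ∈ Set.Icc (-a) a, F θ + F (-θ) ≤ G θ + G (-θ)) :
    ∫ θ in (-a)..a, F θ ≤ ∫ θ in (-a)..a, G θ := by
  have hdouble {H : ℝ → ℝ} (hH : Continuous H) :
      ∫ θ in (-a)..a, (H θ + H (-θ)) = 2 * ∫ θ in (-a)..a, H θ := by
    rw [intervalIntegral.integral_add (hH.intervalIntegrable _ _)
      (Continuous.intervalIntegrable (by fun_prop) _ _), intervalIntegral.integral_comp_neg,
      neg_neg, two_mul]
  have hmono := intervalIntegral.integral_mono_on (μ := volume) (neg_le_self ha)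
    (Continuous.intervalIntegrable (by fun_prop) _ _)
    (Continuous.intervalIntegrable (by fun_prop) _ _) h
  rw [hdouble hF, hdouble hG] at hmono
  linarith

lemma integral_eq_two_mul_integral_of_even {F : ℝ → ℝ} (hF : Continuous F)
    (heven : ∀ θ, F (-θ) = F θ) (a : ℝ) :
    ∫ θ in (-a)..a, F θ = 2 * ∫ θ in 0..a, F θ := by
  have hneg : ∫ θ in (-a)..0, F θ = ∫ θ in 0..a, F θ := by
    simpa [heven] using intervalIntegral.integral_comp_neg (a := -a) (b := 0) F
  rw [← intervalIntegral.integral_add_adjacent_intervals (hF.intervalIntegrable _ 0)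
    (hF.intervalIntegrable _ _), hneg, two_mul]

lemma integral_comp_add_right_of_periodic {F : ℝ → ℝ} (hF : Function.Periodic F π) (ψ : ℝ) :
    ∫ θ in (-(π / 2))..(π / 2), F (θ + ψ) = ∫ θ in (-(π / 2))..(π / 2), F θ := by
  have h := hF.intervalIntegral_add_eq (-(π / 2) + ψ) (-(π / 2))
  rw [intervalIntegral.integral_comp_add_right]
  convert h using 2 <;> ring

lemma neg_pi_div_two_le_pi_div_two : -(π / 2) ≤ π / 2 := neg_le_self pi_div_two_pos.le

lemma integral_add_mul_sin_sq (p q : ℝ) :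
    ∫ θ in (-(π / 2))..(π / 2), (p + q * sin θ ^ 2) = (p + q / 2) * π := by
  rw [intervalIntegral.integral_add intervalIntegrable_const
    (Continuous.intervalIntegrable (by fun_prop) _ _), intervalIntegral.integral_const_mul,
    integral_sin_sq, intervalIntegral.integral_const]
  simp only [cos_pi_div_two, cos_neg, mul_zero, smul_eq_mul]
  ring

lemma integral_cos_mul_add_mul_sin_sq (p q : ℝ) :
    ∫ θ in (-(π / 2))..(π / 2), cos θ * (p + q * sin θ ^ 2) = 2 * p + 2 * q / 3 := by
  have hderiv (θ : ℝ) : HasDerivAt (fun θ => p * sin θ + q / 3 * sin θ ^ 3)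
      (cos θ * (p + q * sin θ ^ 2)) θ := by
    have h := ((hasDerivAt_sin θ).const_mul p).add (((hasDerivAt_sin θ).pow 3).const_mul (q / 3))
    exact h.congr_deriv (by push_cast; ring)
  rw [intervalIntegral.integral_eq_sub_of_hasDerivAt (fun θ _ => hderiv θ)
    (Continuous.intervalIntegrable (by fun_prop) _ _), sin_neg, sin_pi_div_two]
  ring

lemma sq_mul_le_one_sub_cos {x : ℝ} (hx₀ : 0 ≤ x) (hx : x ≤ π / 2) :
    4 / π ^ 2 * x ^ 2 ≤ 1 - cos x := by
  have hchord : 2 * x / π * (√2 / 2) ≤ sin (x / 2) := by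
    have hle : 2 * x / π ≤ 1 := by
      rw [div_le_one pi_pos]
      linarith
    have h := strictConcaveOn_sin_Icc.concaveOn.2 (x := 0) (y := π / 4)
      ⟨le_rfl, pi_pos.le⟩ ⟨by positivity, by linarith [pi_pos]⟩
      (sub_nonneg.2 hle) (by positivity) (sub_add_cancel 1 (2 * x / π))
    have hx2 : 2 * x / π * (π / 4) = x / 2 := by field_simp; ring
    simpa [hx2] using h
  have hsq := pow_le_pow_left₀ (by positivity) hchord 2
  have hcos : cos x = 1 - 2 * sin (x / 2) ^ 2 := by
    rw [sin_sq_eq_half_sub, mul_div_cancel₀ x two_ne_zero]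
    ring
  rw [mul_pow, div_pow, mul_pow, div_pow, sq_sqrt zero_le_two] at hsq
  rw [hcos]
  calc 4 / π ^ 2 * x ^ 2 = 2 * (2 ^ 2 * x ^ 2 / π ^ 2 * (2 / 2 ^ 2)) := by ring
    _ ≤ 1 - (1 - 2 * sin (x / 2) ^ 2) := by linarith

lemma integral_max_sub_cos_zero {x : ℝ} (hx₀ : 0 ≤ x) (hx : x ≤ π / 2) :
    ∫ θ in (-(π / 2))..(π / 2), max (sin x - cos θ) 0 = 2 * (x * sin x - (1 - cos x)) := by
  have heven := integral_eq_two_mul_integral_of_even (F := fun θ => max (sin x - cos θ) 0)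
    (by fun_prop) (fun θ => by rw [cos_neg]) (π / 2)
  have hreflect : ∫ θ in 0..(π / 2), max (sin x - cos θ) 0 =
      ∫ φ in 0..(π / 2), max (sin x - sin φ) 0 := by
    simpa [sin_pi_div_two_sub] using intervalIntegral.integral_comp_sub_left (a := 0) (b := π / 2)
      (fun φ => max (sin x - sin φ) 0) (π / 2)
  have hbelow : ∫ φ in 0..x, max (sin x - sin φ) 0 = ∫ φ in 0..x, (sin x - sin φ) :=
    intervalIntegral.integral_congr fun φ hφ => by
      rw [Set.uIcc_of_le hx₀] at hφ
      exact max_eq_left (sub_nonneg.2 (sin_le_sin_of_le_of_le_pi_div_two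
        (by linarith [pi_pos, hφ.1]) hx hφ.2))
  have habove : ∫ φ in x..(π / 2), max (sin x - sin φ) 0 = ∫ _ in x..(π / 2), (0 : ℝ) :=
    intervalIntegral.integral_congr fun φ hφ => by
      rw [Set.uIcc_of_le hx] at hφ
      exact max_eq_right (sub_nonpos.2 (sin_le_sin_of_le_of_le_pi_div_two
        (by linarith [pi_pos]) hφ.2 hφ.1))
  rw [heven, hreflect, ← intervalIntegral.integral_add_adjacent_intervals (b := x)
    (Continuous.intervalIntegrable (by fun_prop) _ _)
    (Continuous.intervalIntegrable (by fun_prop) _ _), hbelow, habove,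
    intervalIntegral.integral_sub intervalIntegrable_const
      (Continuous.intervalIntegrable (by fun_prop) _ _), intervalIntegral.integral_const,
    integral_sin, intervalIntegral.integral_zero, cos_zero, sub_zero, smul_eq_mul, add_zero]

lemma integral_max_sub_cos_zero_le {t : ℝ} (ht₀ : 0 ≤ t) (ht₁ : t ≤ 1) :
    ∫ θ in (-(π / 2))..(π / 2), max (t - cos θ) 0 ≤ 5 / 4 * t ^ 2 := by
  have hsin : sin (arcsin t) = t := sin_arcsin (by linarith) ht₁
  have hcos := sq_mul_le_one_sub_cos (arcsin_nonneg.2 ht₀) (arcsin_le_pi_div_two t)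
  have hint := integral_max_sub_cos_zero (arcsin_nonneg.2 ht₀) (arcsin_le_pi_div_two t)
  rw [hsin] at hint
  have hsquare : 0 ≤ (π * t / 4 - 2 / π * arcsin t) ^ 2 := sq_nonneg _
  have hexpand : (π * t / 4 - 2 / π * arcsin t) ^ 2 =
      π ^ 2 / 16 * t ^ 2 - arcsin t * t + 4 / π ^ 2 * arcsin t ^ 2 := by
    field_simp
    ring
  have hpi : π ^ 2 ≤ 10 := by nlinarith [pi_pos, pi_lt_d2]
  have hpit := mul_le_mul_of_nonneg_right hpi (sq_nonneg t)
  linarith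

end SymmetricIntegral

section EllipseSpeed

/-- The speed `‖γ' θ‖` of the parametrization `γ θ = (2 cos θ, sin θ)` of the ellipse. -/
def ellipseSpeed (θ : ℝ) : ℝ := √(4 * sin θ ^ 2 + cos θ ^ 2)

/-- The arc length of the half `{x₁ ≥ 0}` of the ellipse. -/
def ellipseHalfPerimeter : ℝ := ∫ θ in (-(π / 2))..(π / 2), ellipseSpeed θ

/-- The integral of the coordinate `x₁` with respect to arc length over the half `{x₁ ≥ 0}` of the
ellipse. -/
def ellipseHalfMoment : ℝ := ∫ θ in (-(π / 2))..(π / 2), 2 * cos θ * ellipseSpeed θ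

@[fun_prop]
lemma continuous_ellipseSpeed : Continuous ellipseSpeed := by
  unfold ellipseSpeed
  fun_prop

lemma ellipseSpeed_sq_eq_one_add (θ : ℝ) : ellipseSpeed θ ^ 2 = 1 + 3 * sin θ ^ 2 := by
  rw [ellipseSpeed, sq_sqrt (by positivity), cos_sq']
  ring

lemma ellipseSpeed_sq_eq_cos_two_mul (θ : ℝ) :
    ellipseSpeed θ ^ 2 = (5 - 3 * cos (2 * θ)) / 2 := by
  rw [ellipseSpeed_sq_eq_one_add, sin_sq, cos_two_mul]
  ring

lemma ellipseSpeed_nonneg (θ : ℝ) : 0 ≤ ellipseSpeed θ := sqrt_nonneg _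

lemma ellipseSpeed_pos (θ : ℝ) : 0 < ellipseSpeed θ := by
  have hsq : 0 < ellipseSpeed θ ^ 2 := by
    rw [ellipseSpeed_sq_eq_one_add]
    positivity
  exact (ellipseSpeed_nonneg θ).lt_of_ne' fun h => by simp [h] at hsq

lemma ellipseSpeed_neg (θ : ℝ) : ellipseSpeed (-θ) = ellipseSpeed θ := by
  rw [ellipseSpeed, ellipseSpeed, sin_neg, cos_neg, neg_sq]

lemma ellipseSpeed_periodic : Function.Periodic ellipseSpeed π := fun θ => by
  rw [ellipseSpeed, ellipseSpeed, sin_add_pi, cos_add_pi, neg_sq, neg_sq]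

lemma one_add_sin_sq_le_ellipseSpeed (θ : ℝ) : 1 + sin θ ^ 2 ≤ ellipseSpeed θ := by
  refine le_of_sq_le_sq ?_ (ellipseSpeed_nonneg θ)
  rw [ellipseSpeed_sq_eq_one_add]
  nlinarith [sin_sq_le_one θ, sq_nonneg (sin θ)]

lemma two_mul_mul_ellipseSpeed_le (m θ : ℝ) :
    2 * m * ellipseSpeed θ ≤ m ^ 2 + 1 + 3 * sin θ ^ 2 := by
  linarith [two_mul_le_add_sq m (ellipseSpeed θ), ellipseSpeed_sq_eq_one_add θ]

lemma le_ellipseHalfPerimeter : 3 / 2 * π ≤ ellipseHalfPerimeter := by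
  calc 3 / 2 * π = ∫ θ in (-(π / 2))..(π / 2), (1 + 1 * sin θ ^ 2) := by
        rw [integral_add_mul_sin_sq]
        ring
    _ ≤ ellipseHalfPerimeter :=
      intervalIntegral.integral_mono_on neg_pi_div_two_le_pi_div_two
        (Continuous.intervalIntegrable (by fun_prop) _ _)
        (Continuous.intervalIntegrable (by fun_prop) _ _)
        fun θ _ => by linarith [one_add_sin_sq_le_ellipseSpeed θ]

lemma ellipseHalfPerimeter_pos : 0 < ellipseHalfPerimeter :=
  lt_of_lt_of_le (by positivity) le_ellipseHalfPerimeter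

lemma ellipseHalfPerimeter_le : ellipseHalfPerimeter ≤ 19 / 12 * π := by
  calc ellipseHalfPerimeter ≤ ∫ θ in (-(π / 2))..(π / 2), (13 / 12 + 1 * sin θ ^ 2) :=
      intervalIntegral.integral_mono_on neg_pi_div_two_le_pi_div_two
        (Continuous.intervalIntegrable (by fun_prop) _ _)
        (Continuous.intervalIntegrable (by fun_prop) _ _)
        fun θ _ => by linarith [two_mul_mul_ellipseSpeed_le (3 / 2) θ]
    _ = 19 / 12 * π := by
        rw [integral_add_mul_sin_sq]
        ring

lemma le_ellipseHalfMoment : 16 / 3 ≤ ellipseHalfMoment := by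
  calc (16 / 3 : ℝ) = ∫ θ in (-(π / 2))..(π / 2), cos θ * (2 + 2 * sin θ ^ 2) := by
        rw [integral_cos_mul_add_mul_sin_sq]
        norm_num
    _ ≤ ellipseHalfMoment :=
      intervalIntegral.integral_mono_on neg_pi_div_two_le_pi_div_two
        (Continuous.intervalIntegrable (by fun_prop) _ _)
        (Continuous.intervalIntegrable (by fun_prop) _ _)
        fun θ hθ => by
          rw [mul_comm 2 (cos θ), mul_assoc]
          exact mul_le_mul_of_nonneg_left (by linarith [one_add_sin_sq_le_ellipseSpeed θ])
            (cos_nonneg_of_mem_Icc hθ)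

lemma ellipseHalfMoment_pos : 0 < ellipseHalfMoment :=
  lt_of_lt_of_le (by norm_num) le_ellipseHalfMoment

lemma ellipseHalfMoment_le : ellipseHalfMoment ≤ 198 / 35 := by
  calc ellipseHalfMoment
      ≤ ∫ θ in (-(π / 2))..(π / 2), cos θ * (74 / 35 + 15 / 7 * sin θ ^ 2) :=
      intervalIntegral.integral_mono_on neg_pi_div_two_le_pi_div_two
        (Continuous.intervalIntegrable (by fun_prop) _ _)
        (Continuous.intervalIntegrable (by fun_prop) _ _)
        fun θ hθ => by
          rw [mul_comm 2, mul_assoc]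
          exact mul_le_mul_of_nonneg_left (by linarith [two_mul_mul_ellipseSpeed_le (7 / 5) θ])
            (cos_nonneg_of_mem_Icc hθ)
    _ = 198 / 35 := by
        rw [integral_cos_mul_add_mul_sin_sq]
        norm_num

lemma ellipseHalfPerimeter_le_ellipseHalfMoment : ellipseHalfPerimeter ≤ ellipseHalfMoment := by
  linarith [ellipseHalfPerimeter_le, le_ellipseHalfMoment, pi_lt_d2]

end EllipseSpeed

/-! ### The maximum of a linear functional and a constant, averaged over the ellipse -/

section MaxCosIntegral

lemma ellipseSpeed_add_sq_add_ellipseSpeed_sub_sq (ψ θ : ℝ) :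
    ellipseSpeed (ψ + θ) ^ 2 + ellipseSpeed (ψ - θ) ^ 2 = 5 - 3 * cos (2 * ψ) * cos (2 * θ) := by
  rw [ellipseSpeed_sq_eq_cos_two_mul, ellipseSpeed_sq_eq_cos_two_mul, mul_add, mul_sub, cos_add,
    cos_sub]
  ring

lemma ellipseSpeed_add_add_ellipseSpeed_sub_le_mul (ψ θ : ℝ) :
    ellipseSpeed (ψ + θ) + ellipseSpeed (ψ - θ) ≤ 2 * (ellipseSpeed ψ * ellipseSpeed θ) := by
  have hψ := ellipseSpeed_nonneg ψ
  have hθ := ellipseSpeed_nonneg θ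
  refine le_of_sq_le_sq ?_ (by positivity)
  have hprod := mul_nonneg (sub_nonneg.2 (cos_le_one (2 * ψ))) (sub_nonneg.2 (cos_le_one (2 * θ)))
  calc (ellipseSpeed (ψ + θ) + ellipseSpeed (ψ - θ)) ^ 2
      ≤ 2 * (ellipseSpeed (ψ + θ) ^ 2 + ellipseSpeed (ψ - θ) ^ 2) := add_sq_le
    _ ≤ (5 - 3 * cos (2 * ψ)) * (5 - 3 * cos (2 * θ)) := by
      rw [ellipseSpeed_add_sq_add_ellipseSpeed_sub_sq]
      linarith
    _ = (2 * (ellipseSpeed ψ * ellipseSpeed θ)) ^ 2 := by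
      rw [mul_pow, mul_pow, ellipseSpeed_sq_eq_cos_two_mul, ellipseSpeed_sq_eq_cos_two_mul]
      ring

lemma ellipseSpeed_add_pi_div_two_sq (ψ : ℝ) :
    ellipseSpeed (ψ + π / 2) ^ 2 = (5 + 3 * cos (2 * ψ)) / 2 := by
  rw [ellipseSpeed_sq_eq_cos_two_mul, mul_add, mul_div_cancel₀ π two_ne_zero, cos_add_pi]
  ring

lemma ellipseSpeed_add_add_ellipseSpeed_sub_le {ψ : ℝ} (hψ : 0 ≤ cos (2 * ψ)) (θ : ℝ) :
    ellipseSpeed (ψ + θ) + ellipseSpeed (ψ - θ) ≤ 2 * ellipseSpeed (ψ + π / 2) := by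
  refine le_of_sq_le_sq ?_ (mul_nonneg zero_le_two (ellipseSpeed_nonneg _))
  calc (ellipseSpeed (ψ + θ) + ellipseSpeed (ψ - θ)) ^ 2
      ≤ 2 * (ellipseSpeed (ψ + θ) ^ 2 + ellipseSpeed (ψ - θ) ^ 2) := add_sq_le
    _ ≤ 2 * (5 + 3 * cos (2 * ψ)) := by
      rw [ellipseSpeed_add_sq_add_ellipseSpeed_sub_sq]
      linarith [mul_le_mul_of_nonneg_left (neg_one_le_cos (2 * θ)) hψ]
    _ = (2 * ellipseSpeed (ψ + π / 2)) ^ 2 := by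
      rw [mul_pow, ellipseSpeed_add_pi_div_two_sq]
      ring

lemma ellipseSpeed_mul_ellipseSpeed_add_pi_div_two_le (ψ : ℝ) :
    ellipseSpeed ψ * ellipseSpeed (ψ + π / 2) ≤ (5 - 9 / 10 * cos (2 * ψ) ^ 2) / 2 := by
  refine le_of_sq_le_sq ?_ (by linarith [cos_sq_le_one (2 * ψ)])
  rw [mul_pow, ellipseSpeed_sq_eq_cos_two_mul, ellipseSpeed_add_pi_div_two_sq]
  nlinarith [sq_nonneg (cos (2 * ψ) ^ 2)]

-- Shifting by `ψ` centres the integrand at the maximum of `|cos|`, and pairing `θ` with `-θ` makes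
-- only `ellipseSpeed (ψ + θ) + ellipseSpeed (ψ - θ)` matter.
lemma two_mul_integral_max_abs_cos_sub_le {ψ t : ℝ} (hψ : 0 ≤ cos (2 * ψ)) (ht₀ : 0 ≤ t)
    (ht₁ : t ≤ 1) :
    2 * ∫ θ in (-(π / 2))..(π / 2), max |cos (θ - ψ)| t * ellipseSpeed θ ≤
      ellipseSpeed ψ * ellipseHalfMoment + 5 / 2 * ellipseSpeed (ψ + π / 2) * t ^ 2 := by
  have hperiodic : Function.Periodic (fun θ => max |cos (θ - ψ)| t * ellipseSpeed θ) π := by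
    intro θ
    beta_reduce
    rw [ellipseSpeed_periodic, add_sub_right_comm, cos_add_pi, abs_neg]
  have hshift := integral_comp_add_right_of_periodic hperiodic ψ
  simp only [add_sub_cancel_right] at hshift
  have hle : ∫ θ in (-(π / 2))..(π / 2), max |cos θ| t * ellipseSpeed (θ + ψ) ≤
      ∫ θ in (-(π / 2))..(π / 2), (ellipseSpeed ψ / 2 * (2 * cos θ * ellipseSpeed θ) +
        ellipseSpeed (ψ + π / 2) * max (t - cos θ) 0) := by
    refine integral_le_integral_of_add_comp_neg_le pi_div_two_pos.le (by fun_prop) (by fun_prop)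
      fun θ hθ => ?_
    have hcos := cos_nonneg_of_mem_Icc hθ
    have hmax : max (cos θ) t = cos θ + max (t - cos θ) 0 := by grind
    have hexcess : 0 ≤ max (t - cos θ) 0 := le_max_right _ _
    rw [cos_neg, ellipseSpeed_neg, abs_of_nonneg hcos, add_comm θ, add_comm (-θ), ← sub_eq_add_neg,
      ← mul_add, hmax, add_mul]
    linarith [mul_le_mul_of_nonneg_left (ellipseSpeed_add_add_ellipseSpeed_sub_le_mul ψ θ) hcos,
      mul_le_mul_of_nonneg_left (ellipseSpeed_add_add_ellipseSpeed_sub_le hψ θ) hexcess]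
  rw [intervalIntegral.integral_add (Continuous.intervalIntegrable (by fun_prop) _ _)
    (Continuous.intervalIntegrable (by fun_prop) _ _), intervalIntegral.integral_const_mul,
    intervalIntegral.integral_const_mul] at hle
  have hexcess := mul_le_mul_of_nonneg_left (integral_max_sub_cos_zero_le ht₀ ht₁)
    (ellipseSpeed_nonneg (ψ + π / 2))
  rw [← hshift, ellipseHalfMoment]
  linarith

lemma ellipseSpeed_mul_ellipseHalfMoment_le (ψ : ℝ) :
    5 / 4 * (ellipseSpeed ψ * ellipseSpeed (ψ + π / 2)) * ellipseHalfMoment +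
      25 / 16 * ellipseSpeed (ψ + π / 2) ^ 2 ≤ ellipseHalfPerimeter ^ 2 := by
  have hmoment : ellipseSpeed ψ * ellipseSpeed (ψ + π / 2) * ellipseHalfMoment ≤
      (5 - 9 / 10 * cos (2 * ψ) ^ 2) / 2 * (198 / 35) :=
    mul_le_mul (ellipseSpeed_mul_ellipseSpeed_add_pi_div_two_le ψ) ellipseHalfMoment_le
      ellipseHalfMoment_pos.le (by linarith [cos_sq_le_one (2 * ψ)])
  have hperimeter : (471 / 100 : ℝ) ^ 2 ≤ ellipseHalfPerimeter ^ 2 := by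
    gcongr
    linarith [le_ellipseHalfPerimeter, pi_gt_d2]
  rw [ellipseSpeed_add_pi_div_two_sq]
  linarith [sq_nonneg (cos (2 * ψ) - 37 / 100), neg_one_le_cos (2 * ψ)]

lemma two_mul_integral_max_abs_cos_sub_le_of_cos_nonneg {ψ t : ℝ} (hψ : 0 ≤ cos (2 * ψ))
    (ht₀ : 0 ≤ t) (ht₁ : t ≤ 1) :
    2 * ∫ θ in (-(π / 2))..(π / 2), max |cos (θ - ψ)| t * ellipseSpeed θ ≤
      √((ellipseSpeed ψ * ellipseHalfMoment) ^ 2 + (2 * t * ellipseHalfPerimeter) ^ 2) := by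
  refine (two_mul_integral_max_abs_cos_sub_le hψ ht₀ ht₁).trans (le_sqrt_of_sq_le ?_)
  have ht : t ^ 2 ≤ 1 := pow_le_one₀ ht₀ ht₁
  have hquartic : 25 / 16 * ellipseSpeed (ψ + π / 2) ^ 2 * t ^ 2 ≤
      25 / 16 * ellipseSpeed (ψ + π / 2) ^ 2 := mul_le_of_le_one_right (by positivity) ht
  have h := mul_le_mul_of_nonneg_left (hquartic.trans
    (le_sub_iff_add_le'.2 (ellipseSpeed_mul_ellipseHalfMoment_le ψ)))
    (show 0 ≤ 4 * t ^ 2 by positivity)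
  linarith

-- Here no shift is needed: pairing `θ` with `-θ` and bounding `max u t ^ 2` by `u ^ 2 + t ^ 2`
-- already gives `ellipseHalfPerimeter` in place of the larger `ellipseHalfMoment`.
lemma two_mul_integral_max_abs_cos_sub_le_of_cos_nonpos {ψ : ℝ} (hψ : cos (2 * ψ) ≤ 0) (t : ℝ) :
    2 * ∫ θ in (-(π / 2))..(π / 2), max |cos (θ - ψ)| t * ellipseSpeed θ ≤
      √((ellipseSpeed ψ * ellipseHalfMoment) ^ 2 + (2 * t * ellipseHalfPerimeter) ^ 2) := by
  have hmax (u : ℝ) : max |u| t ^ 2 ≤ u ^ 2 + t ^ 2 := by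
    rcases max_choice |u| t with h | h <;> rw [h]
    · rw [sq_abs]
      linarith [sq_nonneg t]
    · linarith [sq_nonneg u]
  have hpair (θ : ℝ) : max |cos (θ - ψ)| t + max |cos (-θ - ψ)| t ≤
      √(ellipseSpeed ψ ^ 2 + 4 * t ^ 2) := by
    refine le_sqrt_of_sq_le (add_sq_le.trans ?_)
    have hcos : cos (θ - ψ) ^ 2 + cos (-θ - ψ) ^ 2 = 1 + cos (2 * ψ) * cos (2 * θ) := by
      rw [cos_sq, cos_sq, mul_sub, mul_sub, mul_neg, ← neg_add', cos_neg, cos_add, cos_sub]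
      ring
    rw [ellipseSpeed_sq_eq_cos_two_mul]
    linarith [hmax (cos (θ - ψ)), hmax (cos (-θ - ψ)), neg_one_le_cos (2 * ψ),
      mul_le_mul_of_nonpos_left (neg_one_le_cos (2 * θ)) hψ]
  have hle : ∫ θ in (-(π / 2))..(π / 2), max |cos (θ - ψ)| t * ellipseSpeed θ ≤
      ∫ θ in (-(π / 2))..(π / 2), √(ellipseSpeed ψ ^ 2 + 4 * t ^ 2) / 2 * ellipseSpeed θ := by
    refine integral_le_integral_of_add_comp_neg_le pi_div_two_pos.le (by fun_prop) (by fun_prop)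
      fun θ _ => ?_
    rw [ellipseSpeed_neg, ← add_mul, ← add_mul, add_halves]
    exact mul_le_mul_of_nonneg_right (hpair θ) (ellipseSpeed_nonneg θ)
  rw [intervalIntegral.integral_const_mul, ← ellipseHalfPerimeter] at hle
  calc 2 * ∫ θ in (-(π / 2))..(π / 2), max |cos (θ - ψ)| t * ellipseSpeed θ
      ≤ √(ellipseSpeed ψ ^ 2 + 4 * t ^ 2) * ellipseHalfPerimeter := by linarith
    _ = √((ellipseSpeed ψ * ellipseHalfPerimeter) ^ 2 + (2 * t * ellipseHalfPerimeter) ^ 2) := by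
      rw [← sqrt_sq ellipseHalfPerimeter_pos.le, ← sqrt_mul (by positivity),
        sqrt_sq ellipseHalfPerimeter_pos.le]
      ring_nf
    _ ≤ √((ellipseSpeed ψ * ellipseHalfMoment) ^ 2 + (2 * t * ellipseHalfPerimeter) ^ 2) := by
      have hψ₀ := ellipseSpeed_nonneg ψ
      have hA := ellipseHalfPerimeter_pos.le
      gcongr
      exact ellipseHalfPerimeter_le_ellipseHalfMoment

lemma two_mul_integral_max_abs_cos_sub_le_of_one_le (ψ : ℝ) {t : ℝ} (ht : 1 ≤ t) :
    2 * ∫ θ in (-(π / 2))..(π / 2), max |cos (θ - ψ)| t * ellipseSpeed θ ≤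
      √((ellipseSpeed ψ * ellipseHalfMoment) ^ 2 + (2 * t * ellipseHalfPerimeter) ^ 2) := by
  have hmax (θ : ℝ) : max |cos (θ - ψ)| t = t := max_eq_right ((abs_cos_le_one _).trans ht)
  refine le_sqrt_of_sq_le ?_
  simp only [hmax, intervalIntegral.integral_const_mul]
  rw [← ellipseHalfPerimeter, ← mul_assoc]
  exact le_add_of_nonneg_left (sq_nonneg _)

theorem two_mul_integral_max_abs_cos_sub_le_sqrt (ψ : ℝ) {t : ℝ} (ht : 0 ≤ t) :
    2 * ∫ θ in (-(π / 2))..(π / 2), max |cos (θ - ψ)| t * ellipseSpeed θ ≤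
      √((ellipseSpeed ψ * ellipseHalfMoment) ^ 2 + (2 * t * ellipseHalfPerimeter) ^ 2) := by
  rcases le_total 1 t with ht₁ | ht₁
  · exact two_mul_integral_max_abs_cos_sub_le_of_one_le ψ ht₁
  rcases le_total 0 (cos (2 * ψ)) with hψ | hψ
  · exact two_mul_integral_max_abs_cos_sub_le_of_cos_nonneg hψ ht ht₁
  · exact two_mul_integral_max_abs_cos_sub_le_of_cos_nonpos hψ t

end MaxCosIntegral

/-! ### The uniform distribution on the ellipse -/

section EllipseCurve

/-- The parametrization of the ellipse by the eccentric angle. -/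
def ellipseCurve (θ : ℝ) : E2 := pt (2 * cos θ) (sin θ)

lemma norm_pt (a b : ℝ) : ‖pt a b‖ = √(a ^ 2 + b ^ 2) := by
  simp [pt, EuclideanSpace.norm_eq]

lemma inner_pt (x : E2) (a b : ℝ) : ⟪x, pt a b⟫ = x 0 * a + x 1 * b := by
  simp [pt, PiLp.inner_apply, mul_comm]

lemma contDiff_ellipseCurve : ContDiff ℝ 1 ellipseCurve := by
  refine contDiff_euclidean.2 fun i => ?_
  fin_cases i
  · exact contDiff_const.mul contDiff_cos
  · exact contDiff_sin

lemma hasDerivAt_ellipseCurve (θ : ℝ) :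
    HasDerivAt ellipseCurve (pt (2 * -sin θ) (cos θ)) θ := by
  have hcoord (i : Fin 2) :
      HasDerivAt (fun θ => ellipseCurve θ i) (pt (2 * -sin θ) (cos θ) i) θ := by
    fin_cases i
    · exact (hasDerivAt_cos θ).const_mul 2
    · exact hasDerivAt_sin θ
  rw [hasDerivAt_iff_hasFDerivAt, ← hasFDerivWithinAt_univ, hasFDerivWithinAt_euclidean]
  exact fun i => (hcoord i).hasFDerivAt.hasFDerivWithinAt.congr_fderiv (by ext; simp)

lemma norm_deriv_ellipseCurve (θ : ℝ) : ‖deriv ellipseCurve θ‖ = ellipseSpeed θ := by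
  rw [(hasDerivAt_ellipseCurve θ).deriv, norm_pt, ellipseSpeed]
  ring_nf

lemma ellipseCurve_add_pi (θ : ℝ) : ellipseCurve (θ + π) = -ellipseCurve θ := by
  ext i
  fin_cases i <;> simp [ellipseCurve, pt]

lemma injOn_ellipseCurve : Set.InjOn ellipseCurve (Set.Ioc (-π) π) := by
  intro θ hθ φ hφ h
  have hcos : 2 * cos θ = 2 * cos φ := congrArg (fun x : E2 => x 0) h
  have hsin : sin θ = sin φ := congrArg (fun x : E2 => x 1) h
  have hangle := Real.Angle.cos_sin_inj (mul_left_cancel₀ two_ne_zero hcos) hsin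
  rw [← Real.Angle.toReal_coe_eq_self_iff_mem_Ioc.2 hθ, hangle,
    Real.Angle.toReal_coe_eq_self_iff_mem_Ioc.2 hφ]

lemma image_ellipseCurve : ellipseCurve '' Set.Ioc (-π) π = ellipseL := by
  ext x
  constructor
  · rintro ⟨θ, -, rfl⟩
    change (2 * cos θ) ^ 2 + 4 * sin θ ^ 2 = 4
    linarith [sin_sq_add_cos_sq θ]
  · intro (hx : x 0 ^ 2 + 4 * x 1 ^ 2 = 4)
    let z : ℂ := ⟨x 0 / 2, x 1⟩
    have hz : ‖z‖ = 1 := by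
      rw [← sq_eq_sq₀ (norm_nonneg z) zero_le_one, ← Complex.normSq_eq_norm_sq,
        Complex.normSq_mk]
      linarith
    refine ⟨z.arg, Complex.arg_mem_Ioc z, ?_⟩
    have hcos : cos z.arg = x 0 / 2 := by simpa [hz] using Complex.norm_mul_cos_arg z
    have hsin : sin z.arg = x 1 := by simpa [hz] using Complex.norm_mul_sin_arg z
    ext i
    fin_cases i
    · change 2 * cos z.arg = x 0
      rw [hcos]
      ring
    · exact hsin

-- `r • (cos ψ, sin ψ)` is the image of `v` under the linear map that turns the unit circle into
-- the ellipse, and `‖v‖ = 1` says `r * ellipseSpeed ψ = 2`.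
lemma exists_ellipseSpeed_mul_inner_eq {v : E2} (hv : ‖v‖ = 1) :
    ∃ ψ, ∀ θ, ellipseSpeed ψ * ⟪ellipseCurve θ, v⟫ = 2 * cos (θ - ψ) := by
  let z : ℂ := ⟨2 * v 0, v 1⟩
  have hcos : ‖z‖ * cos z.arg = 2 * v 0 := Complex.norm_mul_cos_arg z
  have hsin : ‖z‖ * sin z.arg = v 1 := Complex.norm_mul_sin_arg z
  have hv' : v 0 ^ 2 + v 1 ^ 2 = 1 := by
    have h := EuclideanSpace.real_norm_sq_eq v
    rw [Fin.sum_univ_two, hv] at h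
    linarith
  have hradius : ellipseSpeed z.arg * ‖z‖ = 2 := by
    have hspeed := ellipseSpeed_nonneg z.arg
    rw [← sq_eq_sq₀ (by positivity) zero_le_two, mul_pow, ellipseSpeed, sq_sqrt (by positivity)]
    linear_combination 4 * (‖z‖ * sin z.arg + v 1) * hsin +
      (‖z‖ * cos z.arg + 2 * v 0) * hcos + 4 * hv'
  refine ⟨z.arg, fun θ => ?_⟩
  have hinner : ⟪ellipseCurve θ, v⟫ = 2 * cos θ * v 0 + sin θ * v 1 := by
    simp [ellipseCurve, pt, PiLp.inner_apply, mul_comm]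
  rw [hinner, cos_sub]
  linear_combination (cos θ * cos z.arg + sin θ * sin z.arg) * hradius -
    ellipseSpeed z.arg * (cos θ * hcos + sin θ * hsin)

end EllipseCurve

section EllipseMeasure

lemma integral_add_two_pi_of_periodic_pi {F : ℝ → ℝ} (hF : Continuous F)
    (hperiodic : Function.Periodic F π) (a : ℝ) :
    ∫ θ in a..(a + 2 * π), F θ = 2 * ∫ θ in (-(π / 2))..(π / 2), F θ := by
  have hperiod (b : ℝ) : ∫ θ in b..(b + π), F θ = ∫ θ in (-(π / 2))..(π / 2), F θ := by
    have h := hperiodic.intervalIntegral_add_eq b (-(π / 2))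
    rwa [neg_add_eq_sub, sub_half] at h
  rw [← intervalIntegral.integral_add_adjacent_intervals (hF.intervalIntegrable _ (a + π))
    (hF.intervalIntegrable _ _), hperiod, two_mul π, ← add_assoc, hperiod, two_mul]

lemma ellipseA_eq_two_mul : ellipseA = 2 * ellipseHalfPerimeter := by
  have h := integral_add_two_pi_of_periodic_pi continuous_ellipseSpeed ellipseSpeed_periodic 0
  rwa [zero_add] at h

lemma setIntegral_ellipseL_of_even {F : E2 → ℝ} (hF : Continuous F) (heven : ∀ x, F (-x) = F x) :
    ∫ x in ellipseL, F x ∂μH[1] =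
      2 * ∫ θ in (-(π / 2))..(π / 2), F (ellipseCurve θ) * ellipseSpeed θ := by
  have hγ := contDiff_ellipseCurve.continuous
  have hperiodic : Function.Periodic (fun θ => F (ellipseCurve θ) * ellipseSpeed θ) π := by
    intro θ
    beta_reduce
    rw [ellipseCurve_add_pi, heven, ellipseSpeed_periodic]
  have h := integral_add_two_pi_of_periodic_pi (by fun_prop) hperiodic (-π)
  rw [show -π + 2 * π = π by ring, intervalIntegral.integral_of_le (neg_le_self pi_pos.le)] at h
  rw [← image_ellipseCurve, setIntegral_hausdorffMeasure_image_Ioc contDiff_ellipseCurve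
    injOn_ellipseCurve, ← h]
  simp only [norm_deriv_ellipseCurve, smul_eq_mul, mul_comm]

lemma integral_ellipseP_of_even {F : E2 → ℝ} (hF : Continuous F) (heven : ∀ x, F (-x) = F x) :
    ∫ x, F x ∂ellipseP =
      (∫ θ in (-(π / 2))..(π / 2), F (ellipseCurve θ) * ellipseSpeed θ) / ellipseHalfPerimeter := by
  have hA := ellipseHalfPerimeter_pos
  rw [ellipseP, integral_smul_measure, setIntegral_ellipseL_of_even hF heven, ENNReal.toReal_inv,
    ellipseA_eq_two_mul, ENNReal.toReal_ofReal (by positivity), smul_eq_mul]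
  field_simp

lemma hausdorffMeasure_ellipseL : μH[1] ellipseL = ENNReal.ofReal ellipseA := by
  have hfinite : μH[1] ellipseL ≠ ∞ :=
    image_ellipseCurve ▸ (hausdorffMeasure_image_Ioc_lt_top contDiff_ellipseCurve _ _).ne
  have h := setIntegral_ellipseL_of_even (F := fun _ => 1) continuous_const fun _ => rfl
  simp only [integral_const, measureReal_restrict_apply_univ, smul_eq_mul, mul_one, one_mul] at h
  rw [ellipseA_eq_two_mul, ellipseHalfPerimeter, ← h, ofReal_measureReal hfinite]

instance isProbabilityMeasure_ellipseP : IsProbabilityMeasure ellipseP := ⟨by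
  have hA := ellipseHalfPerimeter_pos
  rw [ellipseP, Measure.smul_apply, Measure.restrict_apply_univ, hausdorffMeasure_ellipseL,
    smul_eq_mul]
  exact ENNReal.inv_mul_cancel (by simp [ellipseA_eq_two_mul, hA]) ENNReal.ofReal_ne_top⟩

lemma isClosed_ellipseL : IsClosed ellipseL := by
  refine isClosed_eq ?_ continuous_const
  fun_prop

instance isNegInvariant_ellipseP : ellipseP.IsNegInvariant := ⟨by
  have hpreserve := (IsometryEquiv.neg E2).measurePreserving_hausdorffMeasure 1
  have hsymm : IsometryEquiv.neg E2 ⁻¹' ellipseL = ellipseL := by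
    ext x
    simp [ellipseL]
  have h := (hpreserve.restrict_preimage isClosed_ellipseL.measurableSet).map_eq
  rw [hsymm] at h
  rw [Measure.neg, ellipseP, Measure.map_smul]
  exact congrArg _ h⟩

lemma memLp_id_ellipseP : MemLp id 2 ellipseP := by
  refine MemLp.of_bound aestronglyMeasurable_id 2 ?_
  refine Measure.ae_smul_measure ?_ _
  filter_upwards [ae_restrict_mem isClosed_ellipseL.measurableSet] with x hx
  have hx' : x 0 ^ 2 + 4 * x 1 ^ 2 = 4 := hx
  rw [id, EuclideanSpace.norm_eq, Fin.sum_univ_two, sqrt_le_left zero_le_two, norm_eq_abs,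
    norm_eq_abs, sq_abs, sq_abs]
  linarith [sq_nonneg (x 1)]

lemma integral_abs_inner_ellipseP :
    ∫ x, |⟪x, pt 1 0⟫| ∂ellipseP = ellipseHalfMoment / ellipseHalfPerimeter := by
  rw [integral_ellipseP_of_even (by fun_prop) fun x => by rw [inner_neg_left, abs_neg],
    ellipseHalfMoment]
  congr 1
  refine intervalIntegral.integral_congr fun θ hθ => ?_
  rw [Set.uIcc_of_le neg_pi_div_two_le_pi_div_two] at hθ
  have hcos := cos_nonneg_of_mem_Icc hθ
  have hinner : ⟪ellipseCurve θ, pt 1 0⟫ = 2 * cos θ := by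
    rw [inner_pt, mul_one, mul_zero, add_zero]
    rfl
  rw [hinner, abs_of_nonneg (by positivity)]

theorem integral_max_abs_inner_ellipseP_le {v : E2} (hv : ‖v‖ = 1) {s : ℝ} (hs : 0 ≤ s) :
    ∫ x, max |⟪x, v⟫| s ∂ellipseP ≤
      √((ellipseHalfMoment / ellipseHalfPerimeter) ^ 2 + s ^ 2) := by
  obtain ⟨ψ, hψ⟩ := exists_ellipseSpeed_mul_inner_eq hv
  have hA := ellipseHalfPerimeter_pos
  have hw := ellipseSpeed_pos ψ
  have hscale (θ : ℝ) : ellipseSpeed ψ * max |⟪ellipseCurve θ, v⟫| s =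
      2 * max |cos (θ - ψ)| (ellipseSpeed ψ * s / 2) := by
    rw [mul_max_of_nonneg _ _ hw.le, mul_max_of_nonneg _ _ zero_le_two, ← abs_of_pos hw, ← abs_mul,
      abs_of_pos hw, hψ, abs_mul, abs_two, mul_div_cancel₀ _ two_ne_zero]
  have hle := two_mul_integral_max_abs_cos_sub_le_sqrt ψ (t := ellipseSpeed ψ * s / 2)
    (by positivity)
  rw [← intervalIntegral.integral_const_mul] at hle
  simp only [← mul_assoc, ← hscale] at hle
  simp only [mul_assoc, intervalIntegral.integral_const_mul] at hle
  rw [integral_ellipseP_of_even (by fun_prop) fun x => by rw [inner_neg_left, abs_neg],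
    div_le_iff₀ hA]
  refine le_of_mul_le_mul_left (hle.trans_eq ?_) hw
  calc _ = √((ellipseSpeed ψ * ellipseHalfPerimeter) ^ 2 *
        ((ellipseHalfMoment / ellipseHalfPerimeter) ^ 2 + s ^ 2)) := by
        congr 1
        field_simp
    _ = _ := by
        rw [sqrt_mul (by positivity), sqrt_sq (by positivity)]
        ring

end EllipseMeasure

section Bisector

lemma norm_sub_eq_norm_add_iff_inner_eq_zero {E : Type*} [NormedAddCommGroup E]
    [InnerProductSpace ℝ E] (x a : E) : ‖x - a‖ = ‖x + a‖ ↔ ⟪x, a⟫ = 0 := by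
  rw [← sq_eq_sq₀ (norm_nonneg _) (norm_nonneg _), norm_sub_sq_real, norm_add_sq_real]
  constructor <;> intro h <;> linarith

lemma pt_neg_zero (c : ℝ) : pt (-c) 0 = -pt c 0 := by
  ext i
  fin_cases i <;> simp [pt]

lemma pt_zero_eq_smul (c : ℝ) : pt c 0 = c • pt 1 0 := by
  ext i
  fin_cases i <;> simp [pt]

lemma setOf_norm_sub_pt_eq_norm_sub_pt_neg {c : ℝ} (hc : c ≠ 0) :
    {x : E2 | ‖x - pt c 0‖ = ‖x - pt (-c) 0‖} = {x : E2 | x 0 = 0} := by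
  ext x
  simp only [Set.mem_ofPred_eq, pt_neg_zero, sub_neg_eq_add,
    norm_sub_eq_norm_add_iff_inner_eq_zero, inner_pt, mul_zero, add_zero,
    mul_eq_zero_iff_right hc]

end Bisector

/-- For the uniform distribution on the ellipse `x₁² + 4x₂² = 4`, the optimal
set of two-means is `{(c,0), (-c,0)}`, where
`c = (∫_{-π/2}^{π/2} 2cosθ √(4sin²θ+cos²θ) dθ)/(∫_{-π/2}^{π/2} √(4sin²θ+cos²θ) dθ)`
is the first coordinate of the conditional expectation of `X` given
`{x₁ ≥ 0}`; moreover the boundary of the two Voronoi regions is the minor axis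
(the `x₂`-axis). -/
theorem stmt_17 (c : ℝ)
    (hc : c = (∫ θ in (-(Real.pi / 2))..(Real.pi / 2),
        2 * Real.cos θ * Real.sqrt (4 * Real.sin θ ^ 2 + Real.cos θ ^ 2)) /
      (∫ θ in (-(Real.pi / 2))..(Real.pi / 2),
        Real.sqrt (4 * Real.sin θ ^ 2 + Real.cos θ ^ 2))) :
    IsOptimalSet ellipseP 2 {pt c 0, pt (-c) 0} ∧
    {x : E2 | ‖x - pt c 0‖ = ‖x - pt (-c) 0‖} = {x : E2 | x 0 = 0} := by
  replace hc : c = ellipseHalfMoment / ellipseHalfPerimeter := hc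
  have hc₀ : 0 < c := hc ▸ div_pos ellipseHalfMoment_pos ellipseHalfPerimeter_pos
  have hunit : ‖pt 1 0‖ = 1 := by simp [norm_pt]
  refine ⟨?_, setOf_norm_sub_pt_eq_norm_sub_pt_neg hc₀.ne'⟩
  rw [pt_neg_zero, pt_zero_eq_smul]
  refine isOptimalSet_smul_neg_smul memLp_id_ellipseP hunit
    (hc.trans integral_abs_inner_ellipseP.symm) fun v hv s hs => ?_
  rw [hc]
  exact integral_max_abs_inner_ellipseP_le hv hs
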